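/- arXiv:math/0010020 — 4 statements merged into one kernel-verified Lean document; each statement's English description precedes it below -/
import Mathlib

section
/- Let L be a ℤ-module with a symmetric bilinear form (·,·) and let τ : L → L be an isometry satisfying τ² = τ − 1 (so τ has order 6 and only primitive sixth roots of unity as eigenvalues). Then 2(τx, x) = (x, x) for every x ∈ L. Consequently, making L into an 𝒪-module by letting ω act as τ, the form φ(x,y) := ω(x,y) − (x, τy) is 𝒪-linear in the first variable, satisfies φ(y,x) = −conj(φ(x,y)), and φ(x,x) = (1/2)θ(x,x) for all x, y ∈ L. -/
open Polynomial

noncomputable section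

/-- The Eisenstein ring `𝒪 = ℤ[ω]`, where `ω = e^{2πi/6}` is a primitive sixth root of
unity (so `ω² - ω + 1 = 0`), presented as `ℤ[X]/(X² - X + 1)`. -/
abbrev O : Type := AdjoinRoot (X ^ 2 - X + 1 : ℤ[X])

/-- `ω`, the distinguished primitive sixth root of unity in `𝒪`. -/
def ω : O := AdjoinRoot.root _

lemma ω_sq : ω ^ 2 - ω + 1 = 0 := by
  have h := AdjoinRoot.eval₂_root (X ^ 2 - X + 1 : ℤ[X])
  simpa [ω, eval₂_add, eval₂_sub, eval₂_pow, eval₂_X, eval₂_one] using h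

/-- Complex conjugation on the Eisenstein ring: the ring involution with
`conj ω = 1 - ω = ω⁻¹`. -/
def conj : O →+* O :=
  AdjoinRoot.lift (algebraMap ℤ O) (1 - ω) (by
    have h := ω_sq
    simp only [eval₂_add, eval₂_sub, eval₂_pow, eval₂_X, eval₂_one]
    ring_nf
    ring_nf at h
    linear_combination h)

/-- `θ := ω - ω⁻¹ = ω - conj ω = 2ω - 1`, a square root of `-3` in `𝒪`. -/
def θ : O := ω - conj ω

/-!
If an isometry `τ` satisfies `τ² = tτ - 1`, then its inverse, hence its adjoint, is `t - τ`. So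
passing to the adjoint does to `τ` what conjugation does to a root `w` of `X² - tX + 1`, and this
makes `φ(x, y) = w(x, y) - (x, τy)` skew-Hermitian. Skewness gives
`2φ(x, x) = φ(x, x) - conj φ(x, x)`, in which the terms `(x, τx)` cancel. The Eisenstein case is
`t = 1`.
-/

section SkewHermitianForm

variable {R L S : Type*} [CommRing R] [AddCommGroup L] [Module R L] [CommRing S] [Algebra R S]
  {B : LinearMap.BilinForm R L} {τ : Module.End R L} {t : R} {w : S}

lemma isAdjointPair_of_isOrthogonal_of_leftInverse {f g : L → L} (hf : B.IsOrthogonal f)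
    (h : Function.LeftInverse f g) : B.IsAdjointPair B f g := fun x y ↦
  calc B (f x) y = B (f x) (f (g y)) := by rw [h y]
    _ = B x (g y) := hf x (g y)

lemma apply_left_add_apply_right_of_isOrthogonal (hτ : B.IsOrthogonal τ)
    (hτ_sq : τ ^ 2 = t • τ - 1) (x y : L) : B (τ x) y + B x (τ y) = t * B x y := by
  have h_inv : τ * (t • 1 - τ) = 1 := by
    rw [mul_sub, mul_smul_comm, mul_one, ← sq, hτ_sq, sub_sub_cancel]
  have h_adj : B (τ x) y = t * B x y - B x (τ y) := by
    simpa using isAdjointPair_of_isOrthogonal_of_leftInverse hτ (DFunLike.congr_fun h_inv) x y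
  rw [h_adj, sub_add_cancel]

lemma two_mul_apply_self_of_isOrthogonal (hB : B.IsSymm) (hτ : B.IsOrthogonal τ)
    (hτ_sq : τ ^ 2 = t • τ - 1) (x : L) : 2 * B (τ x) x = t * B x x := by
  rw [← apply_left_add_apply_right_of_isOrthogonal hτ hτ_sq, hB.eq x, two_mul]

/-- The form `φ(x, y) = w (x, y) - (x, τ y)` attached to a bilinear form `B = (·, ·)`, with values
in an `R`-algebra `S` containing the scalar `w` that acts on `L` as `τ`. It is bundled as an
`R`-bilinear map rather than by putting a module structure over `S` on `L`; compatibility with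
the action of `w` is `skewHermitianForm_apply_left`. -/
def skewHermitianForm (B : LinearMap.BilinForm R L) (τ : Module.End R L) (w : S) :
    L →ₗ[R] L →ₗ[R] S :=
  w • B.compr₂ (Algebra.linearMap R S) - (B.compl₂ τ).compr₂ (Algebra.linearMap R S)

lemma skewHermitianForm_apply (B : LinearMap.BilinForm R L) (τ : Module.End R L) (w : S)
    (x y : L) :
    skewHermitianForm B τ w x y = w * algebraMap R S (B x y) - algebraMap R S (B x (τ y)) :=
  rfl

lemma skewHermitianForm_apply_left (hτ : B.IsOrthogonal τ) (hτ_sq : τ ^ 2 = t • τ - 1)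
    (hw : w ^ 2 = algebraMap R S t * w - 1) (x y : L) :
    skewHermitianForm B τ w (τ x) y = w * skewHermitianForm B τ w x y := by
  have h_adj : B (τ x) y = t * B x y - B x (τ y) :=
    eq_sub_of_add_eq (apply_left_add_apply_right_of_isOrthogonal hτ hτ_sq x y)
  simp only [skewHermitianForm_apply, hτ x y, h_adj, map_sub, map_mul]
  linear_combination -algebraMap R S (B x y) * hw

lemma skewHermitianForm_swap (hB : B.IsSymm) (hτ : B.IsOrthogonal τ)
    (hτ_sq : τ ^ 2 = t • τ - 1) {σ : S →ₐ[R] S} (hσ : σ w = algebraMap R S t - w) (x y : L) :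
    skewHermitianForm B τ w y x = -σ (skewHermitianForm B τ w x y) := by
  have h_adj : B y (τ x) = t * B x y - B x (τ y) := by
    rw [hB.eq y, ← apply_left_add_apply_right_of_isOrthogonal hτ hτ_sq, add_sub_cancel_right]
  simp only [skewHermitianForm_apply, h_adj, hB.eq y x, map_sub, map_mul, AlgHom.commutes, hσ]
  ring

lemma two_mul_skewHermitianForm_self (hB : B.IsSymm) (hτ : B.IsOrthogonal τ)
    (hτ_sq : τ ^ 2 = t • τ - 1) {σ : S →ₐ[R] S} (hσ : σ w = algebraMap R S t - w) (x : L) :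
    2 * skewHermitianForm B τ w x x = (w - σ w) * algebraMap R S (B x x) :=
  calc 2 * skewHermitianForm B τ w x x
      = skewHermitianForm B τ w x x - σ (skewHermitianForm B τ w x x) := by
        rw [sub_eq_add_neg, ← skewHermitianForm_swap hB hτ hτ_sq hσ, two_mul]
    _ = (w - σ w) * algebraMap R S (B x x) := by
        simp only [skewHermitianForm_apply, map_sub, map_mul, AlgHom.commutes]
        ring

theorem statement0_general (hB : B.IsSymm) (hτ : B.IsOrthogonal τ) (hτ_sq : τ ^ 2 = t • τ - 1)
    (hw : w ^ 2 = algebraMap R S t * w - 1) {σ : S →ₐ[R] S} (hσ : σ w = algebraMap R S t - w) :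
    (∀ x, 2 * B (τ x) x = t * B x x) ∧
    (∀ x y, skewHermitianForm B τ w (τ x) y = w * skewHermitianForm B τ w x y) ∧
    (∀ x y, skewHermitianForm B τ w y x = -σ (skewHermitianForm B τ w x y)) ∧
    (∀ x, 2 * skewHermitianForm B τ w x x = (w - σ w) * algebraMap R S (B x x)) :=
  ⟨two_mul_apply_self_of_isOrthogonal hB hτ hτ_sq, skewHermitianForm_apply_left hτ hτ_sq hw,
    skewHermitianForm_swap hB hτ hτ_sq hσ, two_mul_skewHermitianForm_self hB hτ hτ_sq hσ⟩

end SkewHermitianForm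

lemma ω_sq_eq : ω ^ 2 = ω - 1 := by
  linear_combination ω_sq

lemma conj_ω : conj ω = 1 - ω :=
  AdjoinRoot.lift_root _

/-- The `ℤ`-bilinear form given by a biadditive function; homogeneity over `ℤ` is automatic. -/
def bilinFormOfBiadditive {L : Type*} [AddCommGroup L] (B : L → L → ℤ)
    (hB_add_left : ∀ x x' y, B (x + x') y = B x y + B x' y)
    (hB_add_right : ∀ x y y', B x (y + y') = B x y + B x y') : LinearMap.BilinForm ℤ L :=
  (AddMonoidHom.mk' (fun x ↦ (AddMonoidHom.mk' (B x) (hB_add_right x)).toIntLinearMap)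
    fun x x' ↦ LinearMap.ext (hB_add_left x x')).toIntLinearMap

/-- Let `L` be a ℤ-module with a symmetric bilinear form `B` and
`τ : L → L` an isometry satisfying `τ² = τ − 1`.  Then `2(τx, x) = (x, x)` for all `x`.
Consequently, for the form `φ(x,y) := ω·(x,y) − (x, τy)` with values in `𝒪` (where the
𝒪-module structure on `L` lets `ω` act as `τ`): `φ` is 𝒪-linear in the first variable
(i.e. additive there and `φ(τx, y) = ω·φ(x,y)`), satisfies `φ(y,x) = −conj(φ(x,y))`, and
`φ(x,x) = ½·θ·(x,x)` (stated denominator-free as `2·φ(x,x) = θ·(x,x)`). -/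
theorem statement0 (L : Type*) [AddCommGroup L]
    (B : L → L → ℤ)
    (hB_add_left : ∀ x x' y, B (x + x') y = B x y + B x' y)
    (hB_add_right : ∀ x y y', B x (y + y') = B x y + B x y')
    (hB_symm : ∀ x y, B x y = B y x)
    (τ : L →+ L)
    (hτ_isom : ∀ x y, B (τ x) (τ y) = B x y)
    (hτ_eq : ∀ x, τ (τ x) = τ x - x) :
    (∀ x, 2 * B (τ x) x = B x x) ∧
    (let φ : L → L → O := fun x y => ω * (B x y : O) - (B x (τ y) : O)
     (∀ x x' y, φ (x + x') y = φ x y + φ x' y) ∧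
     (∀ x y, φ (τ x) y = ω * φ x y) ∧
     (∀ x y, φ y x = - conj (φ x y)) ∧
     (∀ x, 2 * φ x x = θ * (B x x : O))) := by
  let B' := bilinFormOfBiadditive B hB_add_left hB_add_right
  have hτ_sq : τ.toIntLinearMap ^ 2 = (1 : ℤ) • τ.toIntLinearMap - 1 := by
    ext x
    simpa [sq] using hτ_eq x
  have hω : ω ^ 2 = algebraMap ℤ O 1 * ω - 1 := by rw [map_one, one_mul, ω_sq_eq]
  have h_conj : conj ω = algebraMap ℤ O 1 - ω := by rw [map_one, conj_ω]
  obtain ⟨h_half, h_linear, h_swap, h_diag⟩ := statement0_general (B := B')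
    (τ := τ.toIntLinearMap) (σ := conj.toIntAlgHom) ⟨hB_symm⟩ hτ_isom hτ_sq hω h_conj
  exact ⟨fun x ↦ (h_half x).trans (one_mul _),
    (skewHermitianForm B' τ.toIntLinearMap ω).map_add₂, h_linear, h_swap, h_diag⟩

end
end

section
/- For 1 ≤ k ≤ 10 let G_k be the k × k complex Hermitian matrix with diagonal entries 3, entries (i, i+1) equal to θ = i√3, entries (i+1, i) equal to −i√3, and all other entries 0 (the complexified Gram matrix of the 𝒪-lattice Λᵏ). Then: G_k is positive definite if and only if 1 ≤ k ≤ 4; G₅ is positive semidefinite with one-dimensional kernel; and for 6 ≤ k ≤ 10, G_k is nondegenerate of signature (k−1, 1), i.e. it has exactly k−1 positive and one negative eigenvalue. -/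
/-!
A tridiagonal Toeplitz matrix with diagonal `a` and off-diagonals `b`, `c` acts on sequences
vanishing at both ends by a three-term recurrence, so that the sequence `uᵐ sin (m x)`, where
`b u² = c`, is an eigenvector as soon as `sin ((k + 1) x) = 0 ≠ sin x`. In the Hermitian case
`c = star b ≠ 0` this gives `k` distinct eigenvalues `a + 2‖b‖ cos (jπ / (k + 1))`, `1 ≤ j ≤ k`,
hence all of them. For `G k` they are `3 + 2√3 cos (jπ / (k + 1))`, whose sign is that of
`5 / 6 - j / (k + 1)` because `cos (5π / 6) = -√3 / 2`, so the inertia of `G k` is a lattice point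
count.
-/

open scoped ComplexOrder

noncomputable section

/-- The complexified Gram matrix `G_k` of the 𝒪-lattice `Λᵏ`: diagonal entries `3`,
entries `(i, i+1)` equal to `θ = i√3`, entries `(i+1, i)` equal to `−i√3`, all other
entries `0`. -/
def G (k : ℕ) : Matrix (Fin k) (Fin k) ℂ := fun i j =>
  if i = j then 3
  else if (i : ℕ) + 1 = (j : ℕ) then Complex.I * (Real.sqrt 3 : ℂ)
  else if (j : ℕ) + 1 = (i : ℕ) then -(Complex.I * (Real.sqrt 3 : ℂ))
  else 0

section HermitianInertia

variable {n 𝕜 : Type*} [Fintype n] [DecidableEq n] [RCLike 𝕜] {A : Matrix n n 𝕜}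

lemma posDef_iff_card_eigenvalues_pos (hA : A.IsHermitian) :
    A.PosDef ↔ (Finset.univ.filter fun i => 0 < hA.eigenvalues i).card = Fintype.card n := by
  rw [hA.posDef_iff_eigenvalues_pos, ← Finset.card_univ, Finset.card_filter_eq_iff]
  simp only [Finset.mem_univ, true_imp_iff]

lemma posSemidef_iff_card_eigenvalues_neg (hA : A.IsHermitian) :
    A.PosSemidef ↔ (Finset.univ.filter fun i => hA.eigenvalues i < 0).card = 0 := by
  rw [hA.posSemidef_iff_eigenvalues_nonneg, Finset.card_filter_eq_zero_iff]
  simp only [Pi.le_def, Pi.zero_apply, Finset.mem_univ, true_imp_iff, not_lt]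

lemma card_eigenvalues_pos_add_neg_eq_rank (hA : A.IsHermitian) :
    (Finset.univ.filter fun i => 0 < hA.eigenvalues i).card +
      (Finset.univ.filter fun i => hA.eigenvalues i < 0).card = A.rank := by
  rw [hA.rank_eq_card_non_zero_eigs, Fintype.card_subtype, ← Finset.card_union_of_disjoint
    (Finset.disjoint_filter.2 fun i _ hpos => hpos.not_gt), ← Finset.filter_or]
  simp only [ne_iff_lt_or_gt, or_comm]

lemma card_filter_eigenvalues_of_injective (hA : A.IsHermitian) {μ : n → ℝ}
    (hμ : Function.Injective μ)
    (hev : ∀ j, Module.End.HasEigenvalue (Matrix.toLin' A) (μ j : 𝕜))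
    (p : ℝ → Prop) [DecidablePred p] :
    (Finset.univ.filter fun i => p (hA.eigenvalues i)).card =
      (Finset.univ.filter fun j => p (μ j)).card := by
  have hmem (j : n) : ∃ i, hA.eigenvalues i = μ j := by
    simpa [Matrix.spectrum_toLin', hA.spectrum_eq_image_range] using (hev j).mem_spectrum
  choose f hf using hmem
  have hinj : Function.Injective f := fun i j hij => hμ (by rw [← hf, ← hf, hij])
  exact (Finset.card_equiv (Equiv.ofBijective f (Finite.injective_iff_bijective.1 hinj))
    (by simp [hf])).symm

end HermitianInertia

lemma finrank_ker_toLin'_eq_sub_rank {K m n : Type*} [Field K] [Fintype n] [DecidableEq n]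
    (A : Matrix m n K) :
    Module.finrank K (LinearMap.ker (Matrix.toLin' A)) = Fintype.card n - A.rank := by
  have h := LinearMap.finrank_range_add_finrank_ker (Matrix.toLin' A)
  rw [Module.finrank_fintype_fun_eq_card, Matrix.toLin'_apply'] at h
  rw [Matrix.toLin'_apply', Matrix.rank]
  omega

lemma det_ne_zero_iff_finrank_ker_eq_zero {K n : Type*} [Field K] [Fintype n] [DecidableEq n]
    (A : Matrix n n K) :
    A.det ≠ 0 ↔ Module.finrank K (LinearMap.ker (Matrix.toLin' A)) = 0 := by
  rw [← isUnit_iff_ne_zero, ← Matrix.isUnit_iff_isUnit_det, ← Matrix.isUnit_toLin'_iff,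
    LinearMap.isUnit_iff_ker_eq_bot, Submodule.finrank_eq_zero]

/-- The tridiagonal Toeplitz matrix of size `k` with entries `a` on the diagonal, `b` above it and
`c` below it. -/
def tridiagonalToeplitz {R : Type*} [Zero R] (k : ℕ) (a b c : R) : Matrix (Fin k) (Fin k) R :=
  fun i j =>
    if i = j then a
    else if (i : ℕ) + 1 = (j : ℕ) then b
    else if (j : ℕ) + 1 = (i : ℕ) then c
    else 0

lemma isHermitian_tridiagonalToeplitz {R : Type*} [AddMonoid R] [StarAddMonoid R] (k : ℕ)
    {a : R} (ha : IsSelfAdjoint a) (b : R) :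
    (tridiagonalToeplitz k a b (star b)).IsHermitian := by
  ext i j
  simp only [Matrix.conjTranspose_apply, tridiagonalToeplitz, Fin.ext_iff]
  split_ifs <;> first | omega | simp [ha.star_eq]

lemma tridiagonalToeplitz_mulVec_apply {R : Type*} [NonUnitalNonAssocSemiring R] {k : ℕ}
    (a b c : R) {v : ℕ → R} (hzero : v 0 = 0) (hlast : v (k + 1) = 0) (i : Fin k) :
    (tridiagonalToeplitz k a b c).mulVec (fun j => v (j + 1)) i =
      c * v i + a * v (i + 1) + b * v (i + 2) := by
  -- The zeros of `v` let the sum run over `0, …, k + 1`, where all three terms of the row occur.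
  let r (m : ℕ) : R := (if (i : ℕ) = m then c * v m else 0) +
    (if (i : ℕ) + 1 = m then a * v m else 0) + (if (i : ℕ) + 2 = m then b * v m else 0)
  have hrow (j : Fin k) : tridiagonalToeplitz k a b c i j * v (j + 1) = r (j + 1) := by
    simp only [tridiagonalToeplitz, Fin.ext_iff, r]
    split_ifs <;> first | omega | simp
  calc (tridiagonalToeplitz k a b c).mulVec (fun j => v (j + 1)) i
      = ∑ m ∈ Finset.range k, r (m + 1) := by
        simp only [Matrix.mulVec, dotProduct, hrow, ← Fin.sum_univ_eq_sum_range fun m => r (m + 1)]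
    _ = ∑ m ∈ Finset.range (k + 2), r m := by
        rw [Finset.sum_range_succ, Finset.sum_range_succ']
        simp [r, hzero, hlast]
    _ = c * v i + a * v (i + 1) + b * v (i + 2) := by
        simp only [r, Finset.sum_add_distrib, Finset.sum_ite_eq, Finset.mem_range]
        have := i.isLt
        rw [if_pos, if_pos, if_pos] <;> omega

lemma hasEigenvalue_tridiagonalToeplitz {k : ℕ} (hk : 0 < k) (a : ℂ) {b c s u x : ℂ} (hu : u ≠ 0)
    (hb : b * u = s) (hc : c = s * u) (hx : Complex.sin x ≠ 0)
    (hlast : Complex.sin ((k + 1) * x) = 0) :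
    Module.End.HasEigenvalue (Matrix.toLin' (tridiagonalToeplitz k a b c))
      (a + 2 * s * Complex.cos x) := by
  let v (m : ℕ) : ℂ := u ^ m * Complex.sin (m * x)
  have hsin (m : ℕ) : Complex.sin (m * x) + Complex.sin ((m + 2) * x) =
      2 * Complex.cos x * Complex.sin ((m + 1) * x) := by
    rw [Complex.sin_add_sin, ← Complex.cos_neg x]
    ring_nf
  refine Module.End.hasEigenvalue_of_hasEigenvector (x := fun j : Fin k => v (j + 1))
    (Module.End.hasEigenvector_iff.2 ⟨Module.End.mem_eigenspace_iff.2 ?_, fun h => ?_⟩)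
  · ext i
    rw [Matrix.toLin'_apply, tridiagonalToeplitz_mulVec_apply a b c (v := v) (by simp [v])
      (by simp [v, hlast])]
    simp only [v, Pi.smul_apply, smul_eq_mul]
    push_cast
    rw [hc]
    linear_combination s * u ^ ((i : ℕ) + 1) * hsin i +
      u ^ ((i : ℕ) + 1) * Complex.sin ((i + 2) * x) * hb
  · simpa [v, hu, hx] using congrFun h ⟨0, hk⟩

/-- The angle `(j + 1)π / (k + 1)`; as `j` varies, the cosines of these angles are the roots of the
Chebyshev polynomial `U_k`. -/
def chebyshevAngle (k : ℕ) (j : Fin k) : ℝ := (j + 1) * Real.pi / (k + 1)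

lemma chebyshevAngle_mem_Ioo (k : ℕ) (j : Fin k) : chebyshevAngle k j ∈ Set.Ioo 0 Real.pi := by
  have hj : (j : ℝ) < k := mod_cast j.isLt
  refine ⟨by unfold chebyshevAngle; positivity, ?_⟩
  rw [chebyshevAngle, div_lt_iff₀ (by positivity), mul_comm]
  gcongr

lemma chebyshevAngle_injective (k : ℕ) : Function.Injective (chebyshevAngle k) := by
  intro i j h
  have hk : (k + 1 : ℝ) ≠ 0 := by positivity
  simpa [chebyshevAngle, div_left_inj' hk, Real.pi_ne_zero, Fin.ext_iff] using h

lemma sin_mul_chebyshevAngle (k : ℕ) (j : Fin k) : Real.sin ((k + 1) * chebyshevAngle k j) = 0 := by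
  rw [chebyshevAngle, mul_div_cancel₀ _ (by positivity)]
  exact mod_cast Real.sin_nat_mul_pi (j + 1)

lemma cos_chebyshevAngle_injective (k : ℕ) :
    Function.Injective fun j => Real.cos (chebyshevAngle k j) := fun i j h =>
  chebyshevAngle_injective k <| Real.injOn_cos
    (Set.Ioo_subset_Icc_self (chebyshevAngle_mem_Ioo k i))
    (Set.Ioo_subset_Icc_self (chebyshevAngle_mem_Ioo k j)) h

lemma hasEigenvalue_hermitian_tridiagonalToeplitz (k : ℕ) (a : ℂ) {b : ℂ} (hb : b ≠ 0)
    (j : Fin k) :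
    Module.End.HasEigenvalue (Matrix.toLin' (tridiagonalToeplitz k a b (star b)))
      (a + 2 * ‖b‖ * Real.cos (chebyshevAngle k j)) := by
  have hnorm : (‖b‖ : ℂ) ≠ 0 := by simpa using hb
  have hmul : b * star b = ‖b‖ * ‖b‖ := by
    rw [← sq]
    exact Complex.mul_conj' b
  have hsin := Real.sin_pos_of_mem_Ioo (chebyshevAngle_mem_Ioo k j)
  rw [Complex.ofReal_cos]
  refine hasEigenvalue_tridiagonalToeplitz (u := star b / ‖b‖) j.pos a ?_ ?_ ?_ ?_ ?_
  · exact div_ne_zero (star_ne_zero.2 hb) hnorm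
  · rw [← mul_div_assoc, hmul, mul_div_cancel_right₀ _ hnorm]
  · rw [mul_div_cancel₀ _ hnorm]
  · exact mod_cast hsin.ne'
  · exact mod_cast sin_mul_chebyshevAngle k j

lemma card_filter_eigenvalues_tridiagonalToeplitz {k : ℕ} {a : ℝ} {b : ℂ} (hb : b ≠ 0)
    (hT : (tridiagonalToeplitz k (a : ℂ) b (star b)).IsHermitian)
    (p : ℝ → Prop) [DecidablePred p] :
    (Finset.univ.filter fun i => p (hT.eigenvalues i)).card =
      (Finset.univ.filter fun j => p (a + 2 * ‖b‖ * Real.cos (chebyshevAngle k j))).card := by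
  refine card_filter_eigenvalues_of_injective hT (fun i j h => ?_) (fun j => ?_) p
  · have hnorm : 2 * ‖b‖ ≠ 0 := by simpa using hb
    exact cos_chebyshevAngle_injective k (mul_left_cancel₀ hnorm (add_left_cancel h))
  · simpa using hasEigenvalue_hermitian_tridiagonalToeplitz k a hb j

lemma G_eq_tridiagonalToeplitz (k : ℕ) :
    G k = tridiagonalToeplitz k ((3 : ℝ) : ℂ) (Complex.I * (Real.sqrt 3 : ℂ))
      (star (Complex.I * (Real.sqrt 3 : ℂ))) := by
  ext i j
  simp [G, tridiagonalToeplitz]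

lemma isHermitian_G (k : ℕ) : (G k).IsHermitian := by
  rw [G_eq_tridiagonalToeplitz]
  exact isHermitian_tridiagonalToeplitz k (Complex.conj_ofReal 3) _

lemma card_filter_eigenvalues_G (k : ℕ) (p : ℝ → Prop) [DecidablePred p] :
    (Finset.univ.filter fun i => p ((isHermitian_G k).eigenvalues i)).card =
      (Finset.univ.filter fun j =>
        p (3 + 2 * Real.sqrt 3 * Real.cos (chebyshevAngle k j))).card := by
  have hθ : Complex.I * (Real.sqrt 3 : ℂ) ≠ 0 := by simp
  have hnorm : ‖Complex.I * (Real.sqrt 3 : ℂ)‖ = Real.sqrt 3 := by simp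
  have hT := isHermitian_G k
  simp only [G_eq_tridiagonalToeplitz] at hT ⊢
  rw [card_filter_eigenvalues_tridiagonalToeplitz hθ hT p, hnorm]

lemma three_add_two_sqrt_three_mul_cos (x : ℝ) :
    3 + 2 * Real.sqrt 3 * Real.cos x =
      2 * Real.sqrt 3 * (Real.cos x - Real.cos (5 * Real.pi / 6)) := by
  have hcos : Real.cos (5 * Real.pi / 6) = -(Real.sqrt 3 / 2) := by
    rw [← Real.cos_pi_div_six, ← Real.cos_pi_sub]
    ring_nf
  rw [hcos]
  linear_combination -Real.mul_self_sqrt (zero_le_three (α := ℝ))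

lemma five_pi_div_six_mem_Icc : 5 * Real.pi / 6 ∈ Set.Icc 0 Real.pi :=
  ⟨by positivity, by linarith [Real.pi_pos]⟩

lemma three_add_two_sqrt_three_mul_cos_pos_iff {x : ℝ} (hx : x ∈ Set.Icc 0 Real.pi) :
    0 < 3 + 2 * Real.sqrt 3 * Real.cos x ↔ x < 5 * Real.pi / 6 := by
  rw [three_add_two_sqrt_three_mul_cos, mul_pos_iff_of_pos_left (by positivity), sub_pos,
    Real.strictAntiOn_cos.lt_iff_gt five_pi_div_six_mem_Icc hx]

lemma three_add_two_sqrt_three_mul_cos_neg_iff {x : ℝ} (hx : x ∈ Set.Icc 0 Real.pi) :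
    3 + 2 * Real.sqrt 3 * Real.cos x < 0 ↔ 5 * Real.pi / 6 < x := by
  rw [three_add_two_sqrt_three_mul_cos, ← neg_pos, ← mul_neg,
    mul_pos_iff_of_pos_left (by positivity), neg_sub, sub_pos,
    Real.strictAntiOn_cos.lt_iff_gt hx five_pi_div_six_mem_Icc]

lemma chebyshevAngle_lt_five_pi_div_six_iff {k : ℕ} (j : Fin k) :
    chebyshevAngle k j < 5 * Real.pi / 6 ↔ 6 * ((j : ℕ) + 1) < 5 * (k + 1) := by
  rw [chebyshevAngle, div_lt_div_iff₀ (by positivity) (by norm_num), mul_right_comm,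
    mul_right_comm 5, mul_lt_mul_iff_left₀ Real.pi_pos, mul_comm _ 6]
  norm_cast

lemma five_pi_div_six_lt_chebyshevAngle_iff {k : ℕ} (j : Fin k) :
    5 * Real.pi / 6 < chebyshevAngle k j ↔ 5 * (k + 1) < 6 * ((j : ℕ) + 1) := by
  rw [chebyshevAngle, div_lt_div_iff₀ (by norm_num) (by positivity), mul_right_comm,
    mul_right_comm _ Real.pi, mul_lt_mul_iff_left₀ Real.pi_pos, mul_comm _ 6]
  norm_cast

lemma card_pos_eigenvalues_G (k : ℕ) :
    (Finset.univ.filter fun i => 0 < (isHermitian_G k).eigenvalues i).card = k - (k + 1) / 6 := by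
  rw [card_filter_eigenvalues_G k (0 < ·)]
  have hsign (j : Fin k) : 0 < 3 + 2 * Real.sqrt 3 * Real.cos (chebyshevAngle k j) ↔
      (j : ℕ) < k - (k + 1) / 6 := by
    rw [three_add_two_sqrt_three_mul_cos_pos_iff
      (Set.Ioo_subset_Icc_self (chebyshevAngle_mem_Ioo k j)), chebyshevAngle_lt_five_pi_div_six_iff]
    omega
  simp only [hsign, Fin.card_filter_val_lt]
  omega

lemma card_neg_eigenvalues_G (k : ℕ) :
    (Finset.univ.filter fun i => (isHermitian_G k).eigenvalues i < 0).card = k / 6 := by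
  rw [card_filter_eigenvalues_G k (· < 0)]
  have hsign (j : Fin k) : 3 + 2 * Real.sqrt 3 * Real.cos (chebyshevAngle k j) < 0 ↔
      ¬ (j : ℕ) < k - k / 6 := by
    rw [three_add_two_sqrt_three_mul_cos_neg_iff
      (Set.Ioo_subset_Icc_self (chebyshevAngle_mem_Ioo k j)), five_pi_div_six_lt_chebyshevAngle_iff]
    omega
  have hcompl := Finset.card_filter_add_card_filter_not (s := Finset.univ)
    fun j : Fin k => (j : ℕ) < k - k / 6
  rw [Fin.card_filter_val_lt, Finset.card_fin] at hcompl
  simp only [hsign]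
  omega

lemma finrank_ker_G (k : ℕ) :
    Module.finrank ℂ (LinearMap.ker (Matrix.toLin' (G k))) = if 6 ∣ k + 1 then 1 else 0 := by
  rw [finrank_ker_toLin'_eq_sub_rank, ← card_eigenvalues_pos_add_neg_eq_rank (isHermitian_G k),
    card_pos_eigenvalues_G, card_neg_eigenvalues_G, Fintype.card_fin]
  split_ifs <;> omega

theorem statement12_general (k : ℕ) :
    ((G k).PosDef ↔ k ≤ 4) ∧
    ((G k).PosSemidef ↔ k ≤ 5) ∧
    Module.finrank ℂ (LinearMap.ker (Matrix.toLin' (G k))) = (if 6 ∣ k + 1 then 1 else 0) ∧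
    ((G k).det ≠ 0 ↔ ¬ 6 ∣ k + 1) ∧
    ∀ hk : (G k).IsHermitian,
      (Finset.univ.filter fun i => 0 < hk.eigenvalues i).card = k - (k + 1) / 6 ∧
      (Finset.univ.filter fun i => hk.eigenvalues i < 0).card = k / 6 := by
  refine ⟨?posDef, ?posSemidef, finrank_ker_G k, ?det,
    fun _ => ⟨card_pos_eigenvalues_G k, card_neg_eigenvalues_G k⟩⟩
  case posDef =>
    rw [posDef_iff_card_eigenvalues_pos (isHermitian_G k), card_pos_eigenvalues_G, Fintype.card_fin]
    omega
  case posSemidef =>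
    rw [posSemidef_iff_card_eigenvalues_neg (isHermitian_G k), card_neg_eigenvalues_G]
    omega
  case det =>
    rw [det_ne_zero_iff_finrank_ker_eq_zero, finrank_ker_G]
    simp

/-- For `1 ≤ k ≤ 10`, the Hermitian matrix `G_k` is positive definite iff
`k ≤ 4`; `G₅` is positive semidefinite with one-dimensional kernel; and for
`6 ≤ k ≤ 10`, `G_k` is nondegenerate of signature `(k−1, 1)`, i.e. it has exactly `k−1`
positive and one negative eigenvalue. -/
theorem statement12 :
    (∀ k : ℕ, 1 ≤ k → k ≤ 10 → ((G k).PosDef ↔ k ≤ 4)) ∧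
    ((G 5).PosSemidef ∧
      Module.finrank ℂ ↥(LinearMap.ker (Matrix.toLin' (G 5))) = 1) ∧
    (∀ k : ℕ, 6 ≤ k → k ≤ 10 →
      (G k).det ≠ 0 ∧
      ∀ hk : (G k).IsHermitian,
        (Finset.univ.filter fun i => 0 < hk.eigenvalues i).card = k - 1 ∧
        (Finset.univ.filter fun i => hk.eigenvalues i < 0).card = 1) := by
  refine ⟨fun k _ _ => (statement12_general k).1, ⟨(statement12_general 5).2.1.2 le_rfl,
    (statement12_general 5).2.2.1⟩, fun k h6 h10 => ?_⟩
  obtain ⟨-, -, -, hdet, hsig⟩ := statement12_general k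
  exact ⟨hdet.2 (by omega), fun hk => by rw [(hsig hk).1, (hsig hk).2]; omega⟩

end
end

section
/- In the commutative ring R := ℤ[x, y]/(x⁶ − 1, y¹² − 1), the annihilator of the element (1 − x)(1 − y) is exactly the ideal generated by 1 + x + x² + ⋯ + x⁵ and 1 + y + y² + ⋯ + y¹¹. -/
noncomputable section

open MvPolynomial

/-- The group ring `R = ℤ[x, y]/(x⁶ − 1, y¹² − 1)` of the product of cyclic groups of
orders 6 and 12 over ℤ. -/
abbrev R13 : Type :=
  MvPolynomial (Fin 2) ℤ ⧸
    Ideal.span {(X 0 : MvPolynomial (Fin 2) ℤ) ^ 6 - 1, (X 1 : MvPolynomial (Fin 2) ℤ) ^ 12 - 1}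

/-- The image of `x` in `R`. -/
def xR : R13 := Ideal.Quotient.mk _ (X 0)

/-- The image of `y` in `R`. -/
def yR : R13 := Ideal.Quotient.mk _ (X 1)

/-!
Write `u = x - 1`, `v = y - 1` and let `s`, `t` be the two geometric sums, so that `u * s` and
`v * t` are the two relations. If `r * u * v = a * u * s + b * v * t` in the polynomial ring, then
`u ∣ b * (v * t)`. Setting `x = 1` leaves `v * t = y ^ n - 1` unchanged, and this is a
non-zero-divisor, so `u ∣ b`. Symmetrically `v ∣ a`, and cancelling `u * v` puts `r` in the
ideal `(s, t)`.
-/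

open scoped nonZeroDivisors

section Span

variable {P : Type*} [CommRing P] {u v s t r : P}

theorem mem_span_pair_of_mul_mul_mem_span_pair (hu : u ∈ P⁰) (hv : v ∈ P⁰)
    (hu_dvd : ∀ b, u ∣ b * (v * t) → u ∣ b) (hv_dvd : ∀ a, v ∣ a * (u * s) → v ∣ a)
    (h : r * (u * v) ∈ Ideal.span {u * s, v * t}) : r ∈ Ideal.span {s, t} := by
  obtain ⟨a, b, hab⟩ := Ideal.mem_span_pair.mp h
  obtain ⟨b', rfl⟩ : u ∣ b := hu_dvd b ⟨r * v - a * s, by linear_combination hab⟩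
  obtain ⟨a', rfl⟩ : v ∣ a := hv_dvd a ⟨r * u - u * b' * t, by linear_combination hab⟩
  refine Ideal.mem_span_pair.mpr ⟨a', b', ?_⟩
  rw [← mul_cancel_right_mem_nonZeroDivisors (mul_mem hu hv)]
  linear_combination hab

theorem mul_mul_mem_span_pair_of_mem_span_pair (u v : P) (h : r ∈ Ideal.span {s, t}) :
    r * (u * v) ∈ Ideal.span {u * s, v * t} := by
  obtain ⟨a, b, rfl⟩ := Ideal.mem_span_pair.mp h
  exact Ideal.mem_span_pair.mpr ⟨a * v, b * u, by ring⟩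

end Span

section Regular

variable {σ A : Type*} [CommRing A]

theorem mem_nonZeroDivisors_of_constantCoeff_mem {f : MvPolynomial σ A}
    (hf : constantCoeff f ∈ A⁰) : f ∈ (MvPolynomial σ A)⁰ := by
  rw [mem_nonZeroDivisors_iff_right]
  intro g hgf
  have hf' : (f : MvPowerSeries σ A) ∈ (MvPowerSeries σ A)⁰ :=
    MvPowerSeries.mem_nonZeroDivisors_of_constantCoeff hf
  have hgf' : (g * f : MvPowerSeries σ A) = 0 := by rw [← coe_mul, hgf, coe_zero]
  exact coe_eq_zero_iff.mp ((mul_right_mem_nonZeroDivisors_eq_zero_iff hf').mp hgf')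

theorem X_pow_sub_one_mem_nonZeroDivisors (i : σ) {n : ℕ} (hn : n ≠ 0) :
    (X i ^ n - 1 : MvPolynomial σ A) ∈ (MvPolynomial σ A)⁰ := by
  apply mem_nonZeroDivisors_of_constantCoeff_mem
  simpa [hn] using isUnit_one.neg.mem_nonZeroDivisors

theorem X_sub_one_mem_nonZeroDivisors (i : σ) :
    (X i - 1 : MvPolynomial σ A) ∈ (MvPolynomial σ A)⁰ := by
  simpa only [pow_one] using X_pow_sub_one_mem_nonZeroDivisors (A := A) i one_ne_zero

theorem X_sub_C_dvd_sub_aeval_update [DecidableEq σ] (i : σ) (a : A) (f : MvPolynomial σ A) :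
    X i - C a ∣ f - aeval (Function.update X i (C a)) f := by
  let q := Ideal.Quotient.mkₐ A (Ideal.span {(X i - C a : MvPolynomial σ A)})
  have hq : q = q.comp (aeval (Function.update X i (C a))) := by
    ext j
    rcases eq_or_ne j i with rfl | hj
    · simp [q, Ideal.Quotient.eq]
    · simp [hj]
  rw [← Ideal.mem_span_singleton, ← Ideal.Quotient.eq]
  exact DFunLike.congr_fun hq f

theorem X_sub_C_dvd_of_dvd_mul [DecidableEq σ] {i : σ} {a : A} {f g : MvPolynomial σ A}
    (hg : aeval (Function.update X i (C a)) g ∈ (MvPolynomial σ A)⁰) (h : X i - C a ∣ f * g) :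
    X i - C a ∣ f := by
  have hfg : aeval (Function.update X i (C a)) (f * g) = 0 := by
    obtain ⟨c, hc⟩ := h
    simp [hc]
  have hf : aeval (Function.update X i (C a)) f = 0 := by
    rwa [map_mul, mul_right_mem_nonZeroDivisors_eq_zero_iff hg] at hfg
  simpa only [hf, sub_zero] using X_sub_C_dvd_sub_aeval_update i a f

theorem X_sub_one_dvd_of_dvd_mul_X_pow_sub_one {i j : σ} (hij : i ≠ j) {n : ℕ} (hn : n ≠ 0)
    {f : MvPolynomial σ A} (h : X i - 1 ∣ f * (X j ^ n - 1)) : X i - 1 ∣ f := by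
  classical
  rw [← C_1] at h ⊢
  refine X_sub_C_dvd_of_dvd_mul ?_ h
  simpa [hij.symm] using X_pow_sub_one_mem_nonZeroDivisors j hn

end Regular

section Annihilator

variable {σ A : Type*} [CommRing A] {i j : σ} {m n : ℕ}

theorem mul_one_sub_X_mul_one_sub_X_mem_span_iff (hij : i ≠ j) (hm : m ≠ 0) (hn : n ≠ 0)
    (f : MvPolynomial σ A) :
    f * ((1 - X i) * (1 - X j)) ∈ Ideal.span {X i ^ m - 1, X j ^ n - 1} ↔
      f ∈ Ideal.span {∑ k ∈ Finset.range m, X i ^ k, ∑ k ∈ Finset.range n, X j ^ k} := by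
  rw [← neg_mul_neg (1 - X i), neg_sub, neg_sub, ← mul_geom_sum, ← mul_geom_sum]
  refine ⟨mem_span_pair_of_mul_mul_mem_span_pair (X_sub_one_mem_nonZeroDivisors i)
    (X_sub_one_mem_nonZeroDivisors j) (fun b hb ↦ ?_) fun a ha ↦ ?_,
    mul_mul_mem_span_pair_of_mem_span_pair _ _⟩
  · rw [mul_geom_sum] at hb
    exact X_sub_one_dvd_of_dvd_mul_X_pow_sub_one hij hn hb
  · rw [mul_geom_sum] at ha
    exact X_sub_one_dvd_of_dvd_mul_X_pow_sub_one hij.symm hm ha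

theorem span_X_pow_sub_one_le_span_geom_sum (i j : σ) (m n : ℕ) :
    Ideal.span {(X i ^ m - 1 : MvPolynomial σ A), X j ^ n - 1} ≤
      Ideal.span {∑ k ∈ Finset.range m, X i ^ k, ∑ k ∈ Finset.range n, X j ^ k} := by
  rw [Ideal.span_le, Set.pair_subset_iff, ← mul_geom_sum, ← mul_geom_sum]
  exact ⟨Ideal.mul_mem_left _ _ (Ideal.subset_span (by simp)),
    Ideal.mul_mem_left _ _ (Ideal.subset_span (by simp))⟩

theorem statement13_general (hij : i ≠ j) (hm : m ≠ 0) (hn : n ≠ 0)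
    (r : MvPolynomial σ A ⧸ Ideal.span {(X i ^ m - 1 : MvPolynomial σ A), X j ^ n - 1}) :
    r * ((1 - Ideal.Quotient.mk _ (X i)) * (1 - Ideal.Quotient.mk _ (X j))) = 0 ↔
      r ∈ Ideal.span {∑ k ∈ Finset.range m, Ideal.Quotient.mk _ (X i) ^ k,
        ∑ k ∈ Finset.range n, Ideal.Quotient.mk _ (X j) ^ k} := by
  obtain ⟨f, rfl⟩ := Ideal.Quotient.mk_surjective r
  have hspan := Ideal.mem_quotient_iff_mem (x := f)
    (span_X_pow_sub_one_le_span_geom_sum (A := A) i j m n)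
  simp only [Ideal.map_span, Set.image_pair, map_sum, map_pow] at hspan
  rw [hspan, ← mul_one_sub_X_mul_one_sub_X_mem_span_iff hij hm hn, ← Ideal.Quotient.eq_zero_iff_mem]
  simp only [map_mul, map_sub, map_one]

end Annihilator

/-- In `R = ℤ[x, y]/(x⁶ − 1, y¹² − 1)`, the annihilator of
`(1 − x)(1 − y)` is exactly the ideal generated by `1 + x + ⋯ + x⁵` and
`1 + y + ⋯ + y¹¹`. -/
theorem statement13 (r : R13) :
    r * ((1 - xR) * (1 - yR)) = 0 ↔
      r ∈ Ideal.span ({∑ i ∈ Finset.range 6, xR ^ i, ∑ i ∈ Finset.range 12, yR ^ i} :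
        Set R13) :=
  statement13_general zero_ne_one (by norm_num) (by norm_num) r

end
end

section
/- The ideal of 𝒪[η]/(η¹² − 1) generated by the image of h lies in the radical of the Hermitian form ψ₀, so ψ₀ induces a Hermitian form ψ on A_𝒪 = 𝒪[η]/(h) for which multiplication by η is unitary. Moreover, the images s₁, …, s₁₀ in A_𝒪 of the elements (ω²η)¹, …, (ω²η)¹⁰ form an 𝒪-basis of A_𝒪 on which ψ(sᵢ, sᵢ) = 3 for all i, ψ(sᵢ, sᵢ₊₁) = θ for 1 ≤ i < 10, and ψ(sᵢ, sⱼ) = 0 for j > i+1; that is, (A_𝒪, ψ) is isomorphic as a Hermitian 𝒪-lattice to Λ¹⁰. -/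
open Polynomial

noncomputable section

/-- `𝒪[η]/(η¹² − 1)`, modelled as coefficient vectors with respect to the 𝒪-basis
`1, η, η², …, η¹¹`. -/
abbrev B12 : Type := Fin 12 → O

/-- The monomial `ηᵃ` as an element of `𝒪[η]/(η¹² − 1)`. -/
def ηpow (a : Fin 12) : B12 := Pi.single a 1

/-- Multiplication by `η` on `𝒪[η]/(η¹² − 1)`: the cyclic shift of coefficients. -/
def S (x : B12) : B12 := fun a => x (a - 1)

/-- The coefficient function `F` of the Hermitian form `ψ₀`: `F(0) = 3`,
`F(11) = −1 − ω`, `F(1) = −1 − ω⁻¹` (note `ω⁻¹ = ω⁵`), and `F(k) = 0` otherwise. -/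
def F12 : Fin 12 → O := fun k =>
  if k = 0 then 3 else if k = 11 then -1 - ω else if k = 1 then -1 - ω ^ 5 else 0

/-- The Hermitian form `ψ₀` on `𝒪[η]/(η¹² − 1)`: 𝒪-linear in the first variable,
conjugate-linear in the second, with `ψ₀(ηᵃ, ηᵇ) = F(a − b mod 12)`. -/
def psi0 (x y : B12) : O := ∑ a : Fin 12, ∑ b : Fin 12, x a * conj (y b) * F12 (a - b)

/-- `Σᵢ₌₀¹¹ ηⁱ`. -/
def σ₁ : B12 := fun _ => 1

/-- `Σᵢ₌₀¹¹ (ωη)ⁱ`. -/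
def σ₂ : B12 := fun a => ω ^ (a : ℕ)

/-- The 𝒪-submodule of `𝒪[η]/(η¹² − 1)` underlying the ideal `(h)`, where
`h = (η¹² − 1)/((η − 1)(η − ω⁻¹))`.  Indeed `(h) = (Σηⁱ, Σ(ωη)ⁱ)` (both generators are
multiples of `h`, and `h` is an 𝒪[η]-combination of them since `ω⁻¹ − 1` is a unit),
and as an 𝒪-module this ideal is spanned by `Σηⁱ` and `Σ(ωη)ⁱ` alone, because
`η·Σηⁱ = Σηⁱ` and `η·Σ(ωη)ⁱ = ω⁻¹·Σ(ωη)ⁱ`. -/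
def N : Submodule O B12 := Submodule.span O {σ₁, σ₂}

/-- `A_𝒪 = 𝒪[η]/(h)`, a free 𝒪-module of rank 10. -/
abbrev A12 : Type := B12 ⧸ N

/-- The quotient map `𝒪[η]/(η¹² − 1) → A_𝒪`. -/
def mkA : B12 → A12 := Submodule.Quotient.mk

/-- The image `s_i` in `A_𝒪` of `(ω²η)^i`, for `i = 1, …, 10` (indexed by `Fin 10`,
so `sB i` is `s_{i+1}`). -/
def sB (i : Fin 10) : A12 :=
  mkA (ω ^ (2 * ((i : ℕ) + 1)) • ηpow (Fin.castLE (by omega) i.succ))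

/-!
The Gram matrix of `ψ₀` is circulant, so the characters `a ↦ zᵃ`, `z¹² = 1`, of the cyclic group
are its eigenvectors, with eigenvalue `∑ₖ zᵏ F(k)`. The generators of `N` are the characters with
`z = 1` and `z = ω`, and for both of them this eigenvalue vanishes; as `ψ₀` is Hermitian, `N` lies
in the left and the right radical.

An element of `N` is determined by its coefficients at `η⁰` and `η¹¹`, and these can be prescribed
freely, because the determinant `ω¹¹ - 1` of the resulting `2 × 2` system is the unit `-ω`. Hence
`N` is complementary to the span of `η¹, …, η¹⁰`, and these monomials, up to the units `ω²ⁱ`, form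
a basis of the quotient.
-/

section Eisenstein

lemma ω_mul_conj_ω : ω * conj ω = 1 := by
  rw [conj_ω]
  linear_combination -ω_sq

lemma conj_ω_sq : conj ω ^ 2 = conj ω - 1 := by
  linear_combination conj ω * conj_ω - ω_mul_conj_ω

lemma ω_pow_three : ω ^ 3 = -1 := by
  linear_combination (ω + 1) * ω_sq

lemma ω_pow_five : ω ^ 5 = conj ω := by
  rw [conj_ω]
  linear_combination ω ^ 2 * ω_pow_three - ω_sq

lemma ω_pow_twelve : ω ^ 12 = 1 := by
  linear_combination (ω ^ 9 - ω ^ 6 + ω ^ 3 - 1) * ω_pow_three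

lemma ω_pow_eleven : ω ^ 11 = conj ω := by
  linear_combination conj ω * ω_pow_twelve - ω ^ 11 * ω_mul_conj_ω

lemma conj_conj (z : O) : conj (conj z) = z := by
  have h : (conj.comp conj).toIntAlgHom = AlgHom.id ℤ O :=
    AdjoinRoot.algHom_ext (by
      change conj (conj ω) = ω
      rw [conj_ω, map_sub, map_one, conj_ω, sub_sub_cancel])
  exact DFunLike.congr_fun h z

end Eisenstein

section CirculantForm

variable {G R : Type*} [AddGroup G] [Fintype G] [CommRing R]

lemma vecMul_circulant_addChar (F : G → R) (χ : AddChar G R) :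
    Matrix.vecMul χ (Matrix.circulant F) = (∑ k, χ k * F k) • ⇑χ := by
  ext b
  calc ∑ a, χ a * F (a - b) = ∑ k, χ k * χ b * F k :=
        Fintype.sum_equiv (Equiv.subRight b) _ _ fun a => by
          rw [Equiv.subRight_apply, ← AddChar.map_add_eq_mul, sub_add_cancel]
    _ = (∑ k, χ k * F k) * χ b := by
        rw [Finset.sum_mul]
        exact Finset.sum_congr rfl fun k _ => mul_right_comm _ _ _

variable [DecidableEq G]

/-- The sesquilinear form on `G → R` whose Gram matrix in the standard basis is the circulant
matrix `F (a - b)`: linear in the first variable and `σ`-linear in the second. -/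
def circulantForm (σ : R →+* R) (F : G → R) : (G → R) →ₗ[R] (G → R) →ₛₗ[σ] R :=
  Matrix.toLinearMapₛₗ₂' R (RingHom.id R) σ (Matrix.circulant F)

variable (σ : R →+* R) (F : G → R)

lemma circulantForm_apply (x y : G → R) :
    circulantForm σ F x y = ∑ a, ∑ b, x a * σ (y b) * F (a - b) := by
  simp only [circulantForm, Matrix.toLinearMapₛₗ₂'_apply, RingHom.id_apply,
    Matrix.circulant_apply, smul_eq_mul, mul_assoc]

lemma circulantForm_smul_single (a b : G) (u v : R) :
    circulantForm σ F (u • Pi.single a 1) (v • Pi.single b 1) = u * σ v * F (a - b) := by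
  rw [LinearMap.map_smulₛₗ₂, map_smulₛₗ, circulantForm, Matrix.toLinearMapₛₗ₂'_single,
    Matrix.circulant_apply, RingHom.id_apply, smul_eq_mul, smul_eq_mul, mul_assoc]

lemma circulantForm_translate (c : G) (x y : G → R) :
    circulantForm σ F (fun a => x (a - c)) (fun b => y (b - c)) = circulantForm σ F x y := by
  simp only [circulantForm_apply]
  refine Fintype.sum_equiv (Equiv.subRight c) _ _ fun a => ?_
  refine Fintype.sum_equiv (Equiv.subRight c) _ _ fun b => ?_
  simp only [Equiv.subRight_apply, sub_sub_sub_cancel_right]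

variable {σ F}

lemma map_circulantForm (hσ : ∀ z, σ (σ z) = z) (hF : ∀ k, σ (F k) = F (-k)) (x y : G → R) :
    σ (circulantForm σ F x y) = circulantForm σ F y x := by
  simp only [circulantForm_apply, map_sum, map_mul, hσ, hF, neg_sub]
  rw [Finset.sum_comm]
  simp only [mul_comm (σ _)]

lemma circulantForm_isRefl (hσ : ∀ z, σ (σ z) = z) (hF : ∀ k, σ (F k) = F (-k)) :
    (circulantForm σ F).IsRefl := fun x y hxy => by
  rw [← map_circulantForm hσ hF, hxy, map_zero]

lemma circulantForm_addChar_eq_zero {χ : AddChar G R} (hχ : ∑ k, χ k * F k = 0) :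
    circulantForm σ F χ = 0 := by
  ext y
  have hcol (b : G) : ∑ a, χ a * F (a - b) = 0 := by
    simpa [hχ, Matrix.vecMul, dotProduct] using congrFun (vecMul_circulant_addChar F χ) b
  rw [circulantForm_apply, Finset.sum_comm]
  refine Finset.sum_eq_zero fun b _ => ?_
  simp only [mul_right_comm _ (σ _), ← Finset.sum_mul, hcol, zero_mul]

end CirculantForm

section RootChar

variable {R : Type*} [CommMonoid R] {n : ℕ} [NeZero n]

/-- The character `a ↦ zᵃ` of `Fin n` attached to an `n`-th root of unity `z`; it is
`AddChar.zmodChar` with `ZMod n` replaced by `Fin n`. -/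
def rootChar (z : R) (hz : z ^ n = 1) : AddChar (Fin n) R where
  toFun a := z ^ (a : ℕ)
  map_zero_eq_one' := by rw [Fin.val_zero, pow_zero]
  map_add_eq_mul' a b := by rw [Fin.val_add, ← pow_eq_pow_mod _ hz, pow_add]

end RootChar

section Radical

lemma psi0_eq_circulantForm (x y : B12) : psi0 x y = circulantForm conj F12 x y :=
  (circulantForm_apply conj F12 x y).symm

lemma conj_F12 (k : Fin 12) : conj (F12 k) = F12 (-k) := by
  have h : F12 (-k) =
      if k = 0 then 3 else if k = 11 then -1 - conj ω else if k = 1 then -1 - ω else 0 := by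
    rw [← ω_pow_five]
    fin_cases k <;> rfl
  rw [h, F12, ω_pow_five]
  split_ifs <;> simp only [map_ofNat, map_sub, map_neg, map_one, map_zero, conj_conj]

lemma circulantForm_F12_isRefl : (circulantForm conj F12).IsRefl :=
  circulantForm_isRefl conj_conj conj_F12

lemma F12_eq_zero_of_notMem {k : Fin 12} (hk : k ∉ ({0, 11, 1} : Finset (Fin 12))) :
    F12 k = 0 := by
  simp only [Finset.mem_insert, Finset.mem_singleton, not_or] at hk
  rw [F12, if_neg hk.1, if_neg hk.2.1, if_neg hk.2.2]

lemma sum_rootChar_mul_F12 (z : O) (hz : z ^ 12 = 1) :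
    ∑ k, rootChar z hz k * F12 k = 3 - (1 + ω) * z ^ 11 - (1 + conj ω) * z := by
  calc ∑ k, rootChar z hz k * F12 k = ∑ k ∈ ({0, 11, 1} : Finset (Fin 12)), z ^ (k : ℕ) * F12 k :=
        (Finset.sum_subset (Finset.subset_univ _) fun k _ hk =>
          mul_eq_zero_of_right _ (F12_eq_zero_of_notMem hk)).symm
    _ = z ^ 0 * 3 + (z ^ 11 * (-1 - ω) + z ^ 1 * (-1 - ω ^ 5)) := by
        rw [Finset.sum_insert (by decide), Finset.sum_pair (by decide)]
        rfl
    _ = 3 - (1 + ω) * z ^ 11 - (1 + conj ω) * z := by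
        rw [ω_pow_five]
        ring

lemma circulantForm_σ₁_eq_zero : circulantForm conj F12 σ₁ = 0 := by
  have hσ₁ : σ₁ = rootChar (n := 12) (1 : O) (one_pow 12) :=
    funext fun a => (one_pow (a : ℕ)).symm
  rw [hσ₁]
  refine circulantForm_addChar_eq_zero ?_
  rw [sum_rootChar_mul_F12, conj_ω]
  ring

lemma circulantForm_σ₂_eq_zero : circulantForm conj F12 σ₂ = 0 := by
  have hσ₂ : σ₂ = rootChar ω ω_pow_twelve := rfl
  rw [hσ₂]
  refine circulantForm_addChar_eq_zero ?_
  rw [sum_rootChar_mul_F12, ω_pow_eleven]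
  linear_combination -2 * ω_mul_conj_ω - conj_ω

lemma N_le_ker : N ≤ LinearMap.ker (circulantForm conj F12) :=
  Submodule.span_le.2 (Set.pair_subset circulantForm_σ₁_eq_zero circulantForm_σ₂_eq_zero)

lemma psi0_radical (n : B12) (hn : n ∈ N) (x : B12) : psi0 x n = 0 ∧ psi0 n x = 0 := by
  have h : circulantForm conj F12 n x = 0 := DFunLike.congr_fun (N_le_ker hn) x
  simpa only [psi0_eq_circulantForm] using And.intro (circulantForm_F12_isRefl n x h) h

end Radical

section InducedForm

/-- The Hermitian form `ψ` induced by `ψ₀` on `A_𝒪 = 𝒪[η]/(h)`. -/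
def psiA : A12 →ₗ[O] A12 →ₛₗ[conj] O :=
  circulantForm_F12_isRefl.liftQ₂ (circulantForm conj F12) N N_le_ker

lemma psiA_mkA (x y : B12) : psiA (mkA x) (mkA y) = psi0 x y :=
  (psi0_eq_circulantForm x y).symm

lemma eq_psiA_of_mkA {ψ : A12 → A12 → O} (hψ : ∀ x y, ψ (mkA x) (mkA y) = psi0 x y) :
    ψ = fun u v => psiA u v := by
  funext u v
  obtain ⟨x, rfl⟩ := Submodule.Quotient.mk_surjective N u
  obtain ⟨y, rfl⟩ := Submodule.Quotient.mk_surjective N v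
  exact (hψ x y).trans (psiA_mkA x y).symm

lemma psiA_mkA_S (x y : B12) : psiA (mkA (S x)) (mkA (S y)) = psiA (mkA x) (mkA y) := by
  simp only [psiA_mkA, psi0_eq_circulantForm]
  exact circulantForm_translate conj F12 1 x y

end InducedForm

section Complement

lemma isCompl_spanSubset_compl {R ι : Type*} [Ring R] [Finite ι] {s : Set ι}
    {P : Submodule R (ι → R)} (h : ∀ x : ι → R, ∃! n, n ∈ P ∧ Set.EqOn n x s) :
    IsCompl (Pi.spanSubset R sᶜ) P := by
  refine IsCompl.of_le (fun x hx => ?_) fun x _ => ?_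
  · have hxs : Set.EqOn 0 x s := fun i hi => (Pi.mem_spanSubset_iff.1 hx.1 i (not_not.2 hi)).symm
    exact (h x).unique ⟨hx.2, fun _ _ => rfl⟩ ⟨P.zero_mem, hxs⟩
  · obtain ⟨n, ⟨hn, hnx⟩, -⟩ := h x
    rw [← sub_add_cancel x n]
    refine Submodule.add_mem_sup (Pi.mem_spanSubset_iff.2 fun i hi => ?_) hn
    rw [Pi.sub_apply, hnx (not_not.1 hi), sub_self]

lemma existsUnique_mem_N_eqOn (x : B12) : ∃! n, n ∈ N ∧ Set.EqOn n x {0, 11} := by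
  have eqOn_iff (p q : O) : Set.EqOn (p • σ₁ + q • σ₂) x {0, 11} ↔
      p + q = x 0 ∧ p + q * conj ω = x 11 := by
    simp [Set.EqOn, σ₁, σ₂, ω_pow_eleven]
  refine ⟨(x 0 - conj ω * (x 0 - x 11)) • σ₁ + (conj ω * (x 0 - x 11)) • σ₂,
    ⟨Submodule.mem_span_pair.2 ⟨_, _, rfl⟩, (eqOn_iff _ _).2 ⟨by ring, ?_⟩⟩, ?_⟩
  · linear_combination (x 0 - x 11) * conj_ω_sq
  · rintro _ ⟨hn, hnx⟩
    obtain ⟨p, q, rfl⟩ := Submodule.mem_span_pair.1 hn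
    obtain ⟨h0, h11⟩ := (eqOn_iff p q).1 hnx
    have hq : q = conj ω * (x 0 - x 11) := by
      linear_combination q * conj_ω_sq + conj ω * (h0 - h11)
    have hp : p = x 0 - conj ω * (x 0 - x 11) := by linear_combination h0 - hq
    rw [hp, hq]

lemma isCompl_spanSubset_N : IsCompl (Pi.spanSubset O {0, 11}ᶜ) N :=
  isCompl_spanSubset_compl existsUnique_mem_N_eqOn

end Complement

section Basis

/-- The exponent `i + 1` of `η` in `sB i`. -/
def sExponent (i : Fin 10) : Fin 12 :=
  Fin.castLE (by omega) i.succ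

lemma sExponent_injective : Function.Injective sExponent := by
  decide

lemma range_sExponent : Set.range sExponent = {0, 11}ᶜ := by
  ext a
  revert a
  simp only [Set.mem_range, Set.mem_compl_iff, Set.mem_insert_iff, Set.mem_singleton_iff]
  decide

/-- `ω` as a unit of `𝒪`. -/
def ωUnit : Oˣ :=
  Units.mkOfMulEqOne ω (conj ω) ω_mul_conj_ω

lemma sB_eq_units_smul :
    sB = (fun i : Fin 10 => ωUnit ^ (2 * ((i : ℕ) + 1))) •
      (N.mkQ ∘ Pi.basisFun O (Fin 12) ∘ sExponent) := by
  funext i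
  rw [Pi.smul_apply', Units.smul_def, Function.comp_apply, Function.comp_apply,
    Pi.basisFun_apply, ← map_smul]
  rfl

lemma span_range_basisFun_sExponent :
    Submodule.span O (Set.range (Pi.basisFun O (Fin 12) ∘ sExponent)) =
      Pi.spanSubset O {0, 11}ᶜ := by
  rw [Set.range_comp, range_sExponent, Pi.spanSubset]

lemma sB_linearIndependent : LinearIndependent O sB := by
  have hη : LinearIndependent O (Pi.basisFun O (Fin 12) ∘ sExponent) :=
    (Pi.basisFun O (Fin 12)).linearIndependent.comp _ sExponent_injective
  rw [sB_eq_units_smul]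
  refine (hη.map ?_).units_smul _
  rw [span_range_basisFun_sExponent, Submodule.ker_mkQ]
  exact isCompl_spanSubset_N.disjoint

lemma span_range_sB : Submodule.span O (Set.range sB) = ⊤ := by
  rw [sB_eq_units_smul]
  refine Module.Basis.units_smul_span_eq_top ?_
  rw [Set.range_comp, ← Submodule.map_span, span_range_basisFun_sExponent,
    Submodule.map_mkQ_eq_top]
  exact isCompl_spanSubset_N.symm.sup_eq_top

end Basis

section Gram

lemma psiA_sB (i j : Fin 10) :
    psiA (sB i) (sB j) = ω ^ (2 * ((i : ℕ) + 1)) * conj ω ^ (2 * ((j : ℕ) + 1)) *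
      F12 (sExponent i - sExponent j) := by
  rw [← map_pow, sB, sB, psiA_mkA, psi0_eq_circulantForm]
  exact circulantForm_smul_single conj F12 _ _ _ _

lemma psiA_sB_self (i : Fin 10) : psiA (sB i) (sB i) = 3 := by
  rw [psiA_sB, ← mul_pow, ω_mul_conj_ω, one_pow, one_mul, sub_self]
  rfl

lemma psiA_sB_succ (i j : Fin 10) (hij : (i : ℕ) + 1 = j) : psiA (sB i) (sB j) = θ := by
  have hF : F12 (sExponent i - sExponent j) = -1 - ω := by
    have : sExponent i - sExponent j = 11 := by
      revert i j
      decide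
    rw [this]
    rfl
  have hunit : ω ^ (2 * ((i : ℕ) + 1)) * conj ω ^ (2 * ((j : ℕ) + 1)) = conj ω ^ 2 := by
    rw [← hij, mul_add 2 ((i : ℕ) + 1) 1, pow_add (conj ω), ← mul_assoc, ← mul_pow,
      ω_mul_conj_ω, one_pow, one_mul, mul_one]
  rw [psiA_sB, hF, hunit, θ, conj_ω]
  linear_combination -ω * ω_sq

lemma psiA_sB_of_add_one_lt (i j : Fin 10) (hij : (i : ℕ) + 1 < j) : psiA (sB i) (sB j) = 0 := by
  have h : sExponent i - sExponent j ∉ ({0, 11, 1} : Finset (Fin 12)) := by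
    revert i j
    decide
  rw [psiA_sB, F12_eq_zero_of_notMem h, mul_zero]

end Gram

/-- The ideal `(h)` of `𝒪[η]/(η¹² − 1)` lies in the radical of `ψ₀`, so
`ψ₀` induces a Hermitian form `ψ` on `A_𝒪 = 𝒪[η]/(h)`, for which multiplication by `η`
is unitary.  Moreover the images `s₁, …, s₁₀` of `(ω²η)¹, …, (ω²η)¹⁰` form an 𝒪-basis
of `A_𝒪` with `ψ(sᵢ,sᵢ) = 3`, `ψ(sᵢ,sᵢ₊₁) = θ` and `ψ(sᵢ,sⱼ) = 0` for `j > i + 1`;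
that is, `(A_𝒪, ψ)` is isomorphic as a Hermitian 𝒪-lattice to `Λ¹⁰`. -/
theorem statement14 :
    (∀ n ∈ N, ∀ x : B12, psi0 x n = 0 ∧ psi0 n x = 0) ∧
    (∃ ψA : A12 → A12 → O, ∀ x y : B12, ψA (mkA x) (mkA y) = psi0 x y) ∧
    (∀ ψA : A12 → A12 → O, (∀ x y : B12, ψA (mkA x) (mkA y) = psi0 x y) →
      (∀ x y : B12, ψA (mkA (S x)) (mkA (S y)) = ψA (mkA x) (mkA y)) ∧
      LinearIndependent O sB ∧
      Submodule.span O (Set.range sB) = ⊤ ∧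
      (∀ i : Fin 10, ψA (sB i) (sB i) = 3) ∧
      (∀ i j : Fin 10, (i : ℕ) + 1 = (j : ℕ) → ψA (sB i) (sB j) = θ) ∧
      (∀ i j : Fin 10, (i : ℕ) + 1 < (j : ℕ) → ψA (sB i) (sB j) = 0)) := by
  refine ⟨psi0_radical, ⟨fun u v => psiA u v, psiA_mkA⟩, fun ψA hψA => ?_⟩
  obtain rfl := eq_psiA_of_mkA hψA
  exact ⟨psiA_mkA_S, sB_linearIndependent, span_range_sB, psiA_sB_self, psiA_sB_succ,
    psiA_sB_of_add_one_lt⟩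

end
end
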